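/- arXiv:1803.00606 — 5 statements merged into one kernel-verified Lean document; each statement's English description precedes it below -/
import Mathlib

section
/- (Performance difference lemma.) In a finite-horizon MDP, for every nonstationary deterministic policy π and every initial state s₁, the suboptimality of π satisfies the exact identity V*_1(s₁) − V^π_1(s₁) = Σ_{h=1}^{H} Σ_{s ∈ S} d^{π,s₁}_h(s) · ( V*_h(s) − Q*_h(s, π_h(s)) ), i.e., the suboptimality equals the expected sum over time steps of the per-state action gaps V*_h(s_h) − Q*_h(s_h, π_h(s_h)) along trajectories generated by following π from s₁. -/
open Finset

/-- **Performance difference lemma** for a finite-horizon MDP.  `Vpol h s` is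
the value of the nonstationary deterministic policy `π` at step `h`;
`Vstar`/`Qstar` are the optimal value/action-value functions, and `d h` is the
state-occupancy distribution at step `h` of the trajectory generated by
following `π` from initial state `s₁`.  The suboptimality of `π` from `s₁`
equals the expected sum over time steps of the per-state action gaps
`V*_h(s) − Q*_h(s, π_h(s))`. -/
theorem performance_difference_lemma
    {S A : Type} [Fintype S] [Fintype A] [Nonempty A]
    (P : S → A → PMF S) (r : S → A → ℝ) (H : ℕ)
    (π : ℕ → S → A)
    (Vpol : ℕ → S → ℝ)
    (hVpolTop : ∀ s : S, Vpol (H + 1) s = 0)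
    (hVpolRec : ∀ h : ℕ, 1 ≤ h → h ≤ H → ∀ s : S,
      Vpol h s = r s (π h s) + ∑ s' : S, (P s (π h s) s').toReal * Vpol (h + 1) s')
    (Vstar : ℕ → S → ℝ) (Qstar : ℕ → S → A → ℝ)
    (hVstarTop : ∀ s : S, Vstar (H + 1) s = 0)
    (hQstar : ∀ h : ℕ, 1 ≤ h → h ≤ H → ∀ (s : S) (a : A),
      Qstar h s a = r s a + ∑ s' : S, (P s a s').toReal * Vstar (h + 1) s')
    (hVstar : ∀ h : ℕ, 1 ≤ h → h ≤ H → ∀ s : S,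
      Vstar h s = Finset.univ.sup' Finset.univ_nonempty (fun a : A => Qstar h s a))
    (s₁ : S)
    (d : ℕ → PMF S)
    (hd1 : d 1 = PMF.pure s₁)
    (hdRec : ∀ h : ℕ, 1 ≤ h → h ≤ H → d (h + 1) = (d h).bind fun s => P s (π h s)) :
    Vstar 1 s₁ - Vpol 1 s₁
      = ∑ h ∈ Finset.Icc 1 H, ∑ s : S,
          (d h s).toReal * (Vstar h s - Qstar h s (π h s)) := by
  classical
  have step : ∀ h : ℕ, 1 ≤ h → h ≤ H →
      ∑ s : S, (d h s).toReal * (Vstar h s - Qstar h s (π h s))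
        = ∑ s : S, (d h s).toReal * (Vstar h s - Vpol h s)
          - ∑ s : S, (d (h + 1) s).toReal * (Vstar (h + 1) s - Vpol (h + 1) s) := by
    intro h h1 hH
    have hd : ∀ s' : S, (d (h + 1) s').toReal
        = ∑ s : S, (d h s).toReal * (P s (π h s) s').toReal := by
      intro s'
      rw [hdRec h h1 hH, PMF.bind_apply, tsum_fintype, ENNReal.toReal_sum]
      · simp [ENNReal.toReal_mul]
      · intro a _
        exact ENNReal.mul_ne_top (PMF.apply_ne_top _ _) (PMF.apply_ne_top _ _)
    have e : ∑ s : S, (d (h + 1) s).toReal * (Vstar (h + 1) s - Vpol (h + 1) s)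
        = ∑ s : S, (d h s).toReal * (Qstar h s (π h s) - Vpol h s) := by
      simp_rw [hd, Finset.sum_mul]
      rw [Finset.sum_comm]
      refine Finset.sum_congr rfl fun s _ => ?_
      rw [hQstar h h1 hH, hVpolRec h h1 hH, add_sub_add_left_eq_sub,
        ← Finset.sum_sub_distrib, Finset.mul_sum]
      refine Finset.sum_congr rfl fun s' _ => ?_
      ring
    rw [e, ← Finset.sum_sub_distrib]
    refine Finset.sum_congr rfl fun s _ => ?_
    ring
  have tele : ∀ n : ℕ, n ≤ H →
      ∑ h ∈ Finset.Icc 1 n, ∑ s : S, (d h s).toReal * (Vstar h s - Qstar h s (π h s))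
        = ∑ s : S, (d 1 s).toReal * (Vstar 1 s - Vpol 1 s)
          - ∑ s : S, (d (n + 1) s).toReal * (Vstar (n + 1) s - Vpol (n + 1) s) := by
    intro n
    induction n with
    | zero => intro _; simp
    | succ n ih =>
      intro hn
      rw [Finset.sum_Icc_succ_top (by omega), ih (by omega), step (n + 1) (by omega) hn]
      ring
  rw [tele H le_rfl]
  have e1 : ∑ s : S, (d 1 s).toReal * (Vstar 1 s - Vpol 1 s) = Vstar 1 s₁ - Vpol 1 s₁ := by
    rw [hd1, Finset.sum_eq_single s₁]
    · simp
    · intro b _ hb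
      simp [PMF.pure_apply, hb]
    · simp
  rw [e1]
  simp [hVpolTop, hVstarTop]
end

section
/- (Suboptimality via learned states and escape probability.) Consider a finite-horizon MDP with nonnegative expected rewards (r(s,a) ≥ 0 for all s,a) whose optimal values are bounded by one (V*_h(s) ≤ 1 for all h, s). Let π be a nonstationary deterministic policy, let G_1, …, G_H ⊆ S be sets of 'learned' states, and let ε_1, …, ε_H ≥ 0 be such that for every h and every s ∈ G_h one has V*_h(s) − Q*_h(s, π_h(s)) ≤ ε_h. Let p denote the probability, under the trajectory distribution in which s_1 = s₁ and s_{h+1} ∼ P(s_h, π_h(s_h)) for h = 1,…,H−1, of the event that s_h ∉ G_h for some h ∈ {1,…,H}. Then V*_1(s₁) − V^π_1(s₁) ≤ p + Σ_{h=1}^{H} ε_h. -/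
open Finset

/-- The distribution over state trajectories generated by following the
nonstationary deterministic policy `π` in the MDP with transition kernel `P`:
`traj P π t h s` is the distribution of the list `[s_h, s_{h+1}, …, s_{h+t}]`
of the next `t+1` states when `s_h = s` and `s_{k+1} ∼ P(s_k, π_k(s_k))`. -/
noncomputable def traj {S A : Type} (P : S → A → PMF S) (π : ℕ → S → A) :
    ℕ → ℕ → S → PMF (List S)
  | 0, _, s => PMF.pure [s]
  | t + 1, h, s =>
      (P s (π h s)).bind fun s' => (traj P π t (h + 1) s').map fun l => s :: l

/-- The event that the trajectory of length `t+1` started at time `h` leaves the learned sets. -/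
def escSet {S : Type} (G : ℕ → Set S) (d : S) (t h : ℕ) : Set (List S) :=
  {l | ∃ k : ℕ, k ≤ t ∧ l.getD k d ∉ G (h + k)}

/-- The escape probability. -/
noncomputable def esc {S A : Type} (P : S → A → PMF S) (π : ℕ → S → A) (G : ℕ → Set S) (d : S)
    (t h : ℕ) (s : S) : ENNReal :=
  (traj P π t h s).toOuterMeasure (escSet G d t h)

theorem outer_univ {α : Type} (q : PMF α) : q.toOuterMeasure Set.univ = 1 := by
  rw [PMF.toOuterMeasure_apply, Set.indicator_univ, PMF.tsum_coe]

theorem outer_le_one {α : Type} (q : PMF α) (E : Set α) : q.toOuterMeasure E ≤ 1 := by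
  rw [← outer_univ q]
  exact MeasureTheory.measure_mono (Set.subset_univ E)

theorem esc_of_notMem {S A : Type} (P : S → A → PMF S) (π : ℕ → S → A) (G : ℕ → Set S) (d : S)
    (t h : ℕ) (s : S) (hs : s ∉ G h) : esc P π G d t h s = 1 := by
  cases t with
  | zero =>
    have : [s] ∈ escSet G d 0 h := ⟨0, le_refl _, by simpa using hs⟩
    simp [esc, traj, PMF.toOuterMeasure_pure_apply, this]
  | succ t =>
    have : (fun l => s :: l) ⁻¹' escSet G d (t + 1) h = Set.univ := by
      ext l
      simp only [Set.mem_preimage, Set.mem_univ, iff_true]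
      exact ⟨0, Nat.zero_le _, by simpa using hs⟩
    simp only [esc, traj, PMF.toOuterMeasure_bind_apply, PMF.toOuterMeasure_map_apply, this,
      outer_univ, mul_one, PMF.tsum_coe]

theorem esc_succ {S A : Type} (P : S → A → PMF S) (π : ℕ → S → A) (G : ℕ → Set S) (d : S)
    (t h : ℕ) (s : S) (hs : s ∈ G h) :
    esc P π G d (t + 1) h s = ∑' s', P s (π h s) s' * esc P π G d t (h + 1) s' := by
  have : (fun l => s :: l) ⁻¹' escSet G d (t + 1) h = escSet G d t (h + 1) := by
    ext l
    constructor
    · rintro ⟨k, hk, hl⟩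
      cases k with
      | zero => exact absurd hs (by simpa using hl)
      | succ k => exact ⟨k, by omega, by simpa [add_assoc, add_comm 1 k] using hl⟩
    · rintro ⟨k, hk, hl⟩
      exact ⟨k + 1, by omega, by simpa [add_assoc, add_comm 1 k] using hl⟩
  simp only [esc, traj, PMF.toOuterMeasure_bind_apply, PMF.toOuterMeasure_map_apply, this]

theorem esc_succ_toReal {S A : Type} [Fintype S] (P : S → A → PMF S) (π : ℕ → S → A)
    (G : ℕ → Set S) (d : S) (t h : ℕ) (s : S) (hs : s ∈ G h) :
    (esc P π G d (t + 1) h s).toReal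
      = ∑ s', (P s (π h s) s').toReal * (esc P π G d t (h + 1) s').toReal := by
  rw [esc_succ P π G d t h s hs, tsum_fintype, ENNReal.toReal_sum]
  · simp only [ENNReal.toReal_mul]
  · intro s' _
    exact ENNReal.mul_ne_top (PMF.apply_ne_top _ _)
      (ne_top_of_le_ne_top ENNReal.one_ne_top (outer_le_one _ _))

theorem sum_toReal_one {S : Type} [Fintype S] (q : PMF S) : ∑ s', (q s').toReal = 1 := by
  rw [← ENNReal.toReal_sum (fun s' _ => PMF.apply_ne_top _ _), ← tsum_fintype (L := .unconditional S), PMF.tsum_coe]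
  simp

/-- **Suboptimality via learned states and escape probability.**  In a
finite-horizon MDP with nonnegative expected rewards and optimal values bounded
by one, if the policy `π` has per-state action gap at most `ε h` on every
"learned" state `s ∈ G h`, then its suboptimality from `s₁` is at most the
probability `p` (under the trajectory distribution of `π` from `s₁`) of
reaching some unlearned state `s_h ∉ G_h`, plus `∑_{h=1}^H ε_h`. -/
theorem suboptimality_le_escape_prob_add_gaps
    {S A : Type} [Fintype S] [Fintype A] [Nonempty A]
    (P : S → A → PMF S) (r : S → A → ℝ) (H : ℕ)
    (hr : ∀ (s : S) (a : A), 0 ≤ r s a)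
    (π : ℕ → S → A)
    (Vpol : ℕ → S → ℝ)
    (hVpolTop : ∀ s : S, Vpol (H + 1) s = 0)
    (hVpolRec : ∀ h : ℕ, 1 ≤ h → h ≤ H → ∀ s : S,
      Vpol h s = r s (π h s) + ∑ s' : S, (P s (π h s) s').toReal * Vpol (h + 1) s')
    (Vstar : ℕ → S → ℝ) (Qstar : ℕ → S → A → ℝ)
    (hVstarTop : ∀ s : S, Vstar (H + 1) s = 0)
    (hQstar : ∀ h : ℕ, 1 ≤ h → h ≤ H → ∀ (s : S) (a : A),
      Qstar h s a = r s a + ∑ s' : S, (P s a s').toReal * Vstar (h + 1) s')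
    (hVstar : ∀ h : ℕ, 1 ≤ h → h ≤ H → ∀ s : S,
      Vstar h s = Finset.univ.sup' Finset.univ_nonempty (fun a : A => Qstar h s a))
    (hVstarLe : ∀ h : ℕ, 1 ≤ h → h ≤ H → ∀ s : S, Vstar h s ≤ 1)
    (G : ℕ → Set S) (ε : ℕ → ℝ) (hε : ∀ h : ℕ, 0 ≤ ε h)
    (hgap : ∀ h : ℕ, 1 ≤ h → h ≤ H → ∀ s ∈ G h, Vstar h s - Qstar h s (π h s) ≤ ε h)
    (s₁ : S) (p : ℝ)
    (hp : p = (∑' l : List S,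
        Set.indicator {l : List S | ∃ h : ℕ, 1 ≤ h ∧ h ≤ H ∧ l.getD (h - 1) s₁ ∉ G h}
          (traj P π (H - 1) 1 s₁) l).toReal) :
    Vstar 1 s₁ - Vpol 1 s₁ ≤ p + ∑ h ∈ Finset.Icc 1 H, ε h := by
  have hpol0 : ∀ t h : ℕ, 1 ≤ h → h + t = H + 1 → ∀ s, 0 ≤ Vpol h s := by
    intro t
    induction t with
    | zero =>
      intro h _ hH s
      have : h = H + 1 := by omega
      rw [this, hVpolTop]
    | succ t ih =>
      intro h h1 hH s
      rw [hVpolRec h h1 (by omega) s]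
      exact add_nonneg (hr _ _) (Finset.sum_nonneg fun s' _ =>
        mul_nonneg ENNReal.toReal_nonneg (ih (h + 1) (by omega) (by omega) s'))
  have key : ∀ t h : ℕ, 1 ≤ h → h + t = H → ∀ s,
      Vstar h s - Vpol h s ≤ (esc P π G s₁ t h s).toReal + ∑ k ∈ Finset.range (t + 1), ε (h + k) := by
    intro t
    induction t with
    | zero =>
      intro h h1 hH s
      by_cases hs : s ∈ G h
      · have h2 := hgap h h1 (by omega) s hs
        have h3 := hVpolRec h h1 (by omega) s
        have h4 := hQstar h h1 (by omega) s (π h s)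
        have h5 : h = H := by omega
        subst h5
        simp only [hVstarTop, hVpolTop] at h3 h4
        have : 0 ≤ (esc P π G s₁ 0 h s).toReal := ENNReal.toReal_nonneg
        simp only [zero_add, Finset.sum_range_one, add_zero]
        linarith
      · rw [esc_of_notMem P π G s₁ _ h s hs]
        have h2 := hVstarLe h h1 (by omega) s
        have h3 := hpol0 (0 + 1) h h1 (by omega) s
        have h4 : 0 ≤ ∑ k ∈ Finset.range (0 + 1), ε (h + k) := Finset.sum_nonneg fun k _ => hε _
        rw [ENNReal.toReal_one]
        linarith
    | succ t ih =>
      intro h h1 hH s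
      by_cases hs : s ∈ G h
      · have h2 := hgap h h1 (by omega) s hs
        have h3 := hVpolRec h h1 (by omega) s
        have h4 := hQstar h h1 (by omega) s (π h s)
        have h5 : ∑ s', (P s (π h s) s').toReal * (Vstar (h + 1) s' - Vpol (h + 1) s')
            ≤ ∑ s', (P s (π h s) s').toReal * ((esc P π G s₁ t (h + 1) s').toReal
              + ∑ k ∈ Finset.range (t + 1), ε (h + 1 + k)) :=
          Finset.sum_le_sum fun s' _ => mul_le_mul_of_nonneg_left
            (ih (h + 1) (by omega) (by omega) s') ENNReal.toReal_nonneg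
        simp only [mul_sub, mul_add, Finset.sum_sub_distrib, Finset.sum_add_distrib] at h5
        rw [← Finset.sum_mul, sum_toReal_one, one_mul, ← esc_succ_toReal P π G s₁ t h s hs] at h5
        rw [Finset.sum_range_succ']
        have h6 : ∑ k ∈ Finset.range (t + 1), ε (h + (k + 1))
            = ∑ k ∈ Finset.range (t + 1), ε (h + 1 + k) :=
          Finset.sum_congr rfl fun k _ => by congr 1; omega
        rw [h6, add_zero]
        linarith
      · rw [esc_of_notMem P π G s₁ _ h s hs]
        have h2 := hVstarLe h h1 (by omega) s
        have h3 := hpol0 (t + 1 + 1) h h1 (by omega) s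
        have h4 : 0 ≤ ∑ k ∈ Finset.range (t + 1 + 1), ε (h + k) :=
          Finset.sum_nonneg fun k _ => hε _
        rw [ENNReal.toReal_one]
        linarith
  have hp0 : 0 ≤ p := hp ▸ ENNReal.toReal_nonneg
  cases H with
  | zero =>
    have h1 := hVstarTop s₁
    have h2 := hVpolTop s₁
    rw [zero_add] at h1 h2
    rw [h1, h2]
    simpa using hp0
  | succ n =>
    have h1 := key n 1 le_rfl (by omega) s₁
    have h2 : p = (esc P π G s₁ n 1 s₁).toReal := by
      rw [hp, esc, PMF.toOuterMeasure_apply]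
      have : {l : List S | ∃ h : ℕ, 1 ≤ h ∧ h ≤ n + 1 ∧ l.getD (h - 1) s₁ ∉ G h}
          = escSet G s₁ n 1 := by
        ext l
        constructor
        · rintro ⟨h, ha, hb, hc⟩
          refine ⟨h - 1, by omega, ?_⟩
          rwa [show 1 + (h - 1) = h by omega]
        · rintro ⟨k, hk, hl⟩
          refine ⟨1 + k, by omega, by omega, ?_⟩
          rwa [show 1 + k - 1 = k by omega]
      rw [this, Nat.add_sub_cancel]
    have h3 : ∑ h ∈ Finset.Icc 1 (n + 1), ε h = ∑ k ∈ Finset.range (n + 1), ε (1 + k) := by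
      rw [← Finset.Ico_add_one_right_eq_Icc, Finset.sum_Ico_eq_sum_range]
      rfl
    rw [h2, h3]
    exact h1
end

section
/- (Error propagation for one-step empirical policy optimization with approximate future values.) Let X be a finite set of contexts with a probability mass function μ on X, let A be a finite nonempty set of actions, let R : X → A → ℝ be expected immediate rewards, and let W, W★ : A → ℝ be estimated and true future values satisfying |W(a) − W★(a)| ≤ β for all a ∈ A. Let Π be a finite set of policies X → A containing a policy π★ with π★(x) ∈ argmax_{a ∈ A} ( R(x,a) + W★(a) ) for every x ∈ X. Define the optimal value V★ = Σ_x μ(x) · max_{a ∈ A} ( R(x,a) + W★(a) ) and, for π ∈ Π, the surrogate value V(π) = Σ_x μ(x) · ( R(x, π(x)) + W(π(x)) ). Suppose V̂ : Π → ℝ satisfies |V̂(π) − V(π)| ≤ ε_stat for all π ∈ Π, and suppose π̃ ∈ Π satisfies V̂(π̃) ≥ max_{π ∈ Π} V̂(π) − ε_sub. Then the estimate Ṽ := V̂(π̃) satisfies |Ṽ − V★| ≤ ε_stat + β + ε_sub. -/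
open Finset

/-- **Error propagation for one-step empirical policy optimization with
approximate future values.**  With context distribution `μ`, expected rewards
`R`, estimated future values `W` within `β` of the true future values `Wstar`,
a finite policy class `Pi` containing a pointwise-optimal policy `πstar`, an
empirical estimate `Vhat` of the surrogate value that is uniformly `εstat`
accurate on `Pi`, and an `εsub`-approximate maximizer `πt` of `Vhat` over `Pi`,
the estimate `Vhat πt` is within `εstat + β + εsub` of the optimal value
`V★ = ∑ₓ μ(x) · maxₐ (R(x,a) + Wstar(a))`. -/
theorem error_propagation_policy_opt
    {X A : Type} [Fintype X] [Fintype A] [Nonempty A]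
    (μ : X → ℝ) (hμ0 : ∀ x : X, 0 ≤ μ x) (hμ1 : ∑ x : X, μ x = 1)
    (R : X → A → ℝ) (W Wstar : A → ℝ) (β : ℝ)
    (hW : ∀ a : A, |W a - Wstar a| ≤ β)
    (Pi : Finset (X → A)) (πstar : X → A) (hπstarMem : πstar ∈ Pi)
    (hπstar : ∀ (x : X) (a : A), R x a + Wstar a ≤ R x (πstar x) + Wstar (πstar x))
    (εstat εsub : ℝ)
    (Vhat : (X → A) → ℝ)
    (hVhat : ∀ π ∈ Pi, |Vhat π - ∑ x : X, μ x * (R x (π x) + W (π x))| ≤ εstat)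
    (πt : X → A) (hπtMem : πt ∈ Pi)
    (hπtMax : ∀ π ∈ Pi, Vhat π - εsub ≤ Vhat πt) :
    |Vhat πt - ∑ x : X, μ x * (Finset.univ.sup' Finset.univ_nonempty
        (fun a : A => R x a + Wstar a))|
      ≤ εstat + β + εsub := by
  have hsub : 0 ≤ εsub := by linarith [hπtMax πt hπtMem]
  have hup : ∑ x : X, μ x * (R x (πt x) + W (πt x)) ≤
      ∑ x : X, μ x * (Finset.univ.sup' Finset.univ_nonempty
        (fun a : A => R x a + Wstar a)) + β := by
    have hβ : β = ∑ x : X, μ x * β := by rw [← Finset.sum_mul, hμ1, one_mul]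
    rw [hβ, ← Finset.sum_add_distrib]
    refine Finset.sum_le_sum fun x _ => ?_
    rw [← mul_add]
    refine mul_le_mul_of_nonneg_left ?_ (hμ0 x)
    have h1 := Finset.le_sup' (fun a : A => R x a + Wstar a) (Finset.mem_univ (πt x))
    have h2 := (abs_le.mp (hW (πt x))).2
    linarith
  have hlow : ∑ x : X, μ x * (Finset.univ.sup' Finset.univ_nonempty
        (fun a : A => R x a + Wstar a)) ≤
      ∑ x : X, μ x * (R x (πstar x) + W (πstar x)) + β := by
    have hβ : β = ∑ x : X, μ x * β := by rw [← Finset.sum_mul, hμ1, one_mul]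
    rw [hβ, ← Finset.sum_add_distrib]
    refine Finset.sum_le_sum fun x _ => ?_
    rw [← mul_add]
    refine mul_le_mul_of_nonneg_left ?_ (hμ0 x)
    refine Finset.sup'_le _ _ fun a _ => ?_
    have h2 := (abs_le.mp (hW (πstar x))).1
    linarith [hπstar x a]
  have h3 := abs_le.mp (hVhat πt hπtMem)
  have h4 := abs_le.mp (hVhat πstar hπstarMem)
  have h5 := hπtMax πstar hπstarMem
  rw [abs_le]
  constructor <;> linarith [h3.1, h3.2, h4.1, h4.2]
end

section
/- (Anti-concentration core of the Bellman-backup lower bound.) Let H ≥ 1 be an integer, ε ∈ (0,1), and let n be a positive integer with n ≤ 4^H / (32 ε²). Let X be a Binomial(n, 1/2) random variable (the sum of n i.i.d. Bernoulli(1/2) variables). Then P[ X ≥ n·(1/2 + ε/2^H) ] ≥ 1/4; equivalently, with probability at least 1/4 the empirical mean X/n of the n Bernoulli(1/2) samples is at least 1/2 + ε/2^H. -/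
open Finset

lemma aux_central (m : ℕ) : (m.centralBinom) ^ 2 * (3 * m + 1) ≤ 16 ^ m := by
  induction m with
  | zero => simp
  | succ m ih =>
    have h := Nat.succ_mul_centralBinom_succ m
    have h2 : (m + 1) ^ 2 * ((m + 1).centralBinom ^ 2 * (3 * (m + 1) + 1))
        = (2 * (2 * m + 1)) ^ 2 * (3 * m + 4) * m.centralBinom ^ 2 := by
      calc _ = ((m + 1) * (m + 1).centralBinom) ^ 2 * (3 * m + 4) := by ring
        _ = _ := by rw [h]; ring
    have h3 : (2 * (2 * m + 1)) ^ 2 * (3 * m + 4) ≤ 16 * (m + 1) ^ 2 * (3 * m + 1) := by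
      nlinarith
    have hp : 0 < (m + 1) ^ 2 := by positivity
    refine le_of_mul_le_mul_left ?_ hp
    rw [h2]
    calc _ ≤ 16 * (m + 1) ^ 2 * (3 * m + 1) * m.centralBinom ^ 2 := by gcongr
      _ = 16 * (m + 1) ^ 2 * (m.centralBinom ^ 2 * (3 * m + 1)) := by ring
      _ ≤ 16 * (m + 1) ^ 2 * 16 ^ m := by gcongr
      _ = _ := by ring

lemma aux_mid (n : ℕ) : (n.choose (n / 2)) ^ 2 * (3 * n + 2) ≤ 2 * 4 ^ n := by
  obtain ⟨m, rfl | rfl⟩ := Nat.even_or_odd' n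
  · have h := aux_central m
    rw [Nat.centralBinom_eq_two_mul_choose] at h
    have : 2 * m / 2 = m := by omega
    rw [this, pow_mul]
    norm_num
    nlinarith
  · have h := aux_central (m + 1)
    have e : (m + 1).centralBinom = 2 * (2 * m + 1).choose m := by
      rw [Nat.centralBinom_eq_two_mul_choose, show 2 * (m + 1) = (2 * m + 1) + 1 by ring,
        Nat.choose_succ_succ, Nat.choose_symm_half]
      ring
    rw [e] at h
    have : (2 * m + 1) / 2 = m := by omega
    rw [this, pow_succ 4, pow_mul]
    rw [pow_succ 16] at h
    norm_num
    have := Nat.zero_le ((2 * m + 1).choose m ^ 2)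
    nlinarith

lemma aux_sym (n j : ℕ) (hj : n < 2 * j) (hjn : j ≤ n) :
    2 ^ n ≤ 2 * ∑ k ∈ Finset.Ico j (n + 1), n.choose k
      + (2 * j - n - 1) * n.choose (n / 2) := by
  have hs : ∑ k ∈ Finset.Ico 0 (n + 1 - j), n.choose k
      = ∑ k ∈ Finset.Ico j (n + 1), n.choose k := by
    have h := Finset.sum_Ico_reflect (fun k => n.choose k) 0 (m := n + 1 - j) (n := n) (by omega)
    rw [show n + 1 - (n + 1 - j) = j by omega] at h
    simp only [Nat.sub_zero] at h
    rw [← h]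
    refine Finset.sum_congr rfl fun k hk => ?_
    rw [Finset.mem_Ico] at hk
    exact (Nat.choose_symm (by omega)).symm
  have ht := Nat.sum_range_choose n
  rw [← ht, Finset.range_eq_Ico,
    ← Finset.sum_Ico_consecutive _ (Nat.zero_le (n + 1 - j)) (by omega : n + 1 - j ≤ n + 1),
    ← Finset.sum_Ico_consecutive _ (by omega : n + 1 - j ≤ j) (by omega : j ≤ n + 1), hs]
  have hm : ∑ k ∈ Finset.Ico (n + 1 - j) j, n.choose k ≤ (2 * j - n - 1) * n.choose (n / 2) := by
    have h := Finset.sum_le_card_nsmul (Finset.Ico (n + 1 - j) j) (fun k => n.choose k)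
      (n.choose (n / 2)) (fun k _ => Nat.choose_le_middle k n)
    rw [Nat.card_Ico, smul_eq_mul, show j - (n + 1 - j) = 2 * j - n - 1 by omega] at h
    exact h
  omega

lemma aux_red (n j : ℕ) (x : ℝ) (hx : x ≤ j)
    (h : 2 ^ n ≤ 4 * (∑ k ∈ Finset.Ico j (n + 1), (n.choose k : ℝ))) :
    (1 : ℝ) / 4 ≤ ∑ k ∈ Finset.range (n + 1),
          if x ≤ (k : ℝ) then (n.choose k : ℝ) / 2 ^ n else 0 := by
  have h1 : (1 : ℝ) / 4 ≤ ∑ k ∈ Finset.Ico j (n + 1), (n.choose k : ℝ) / 2 ^ n := by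
    rw [← Finset.sum_div, le_div_iff₀ (by positivity)]
    linarith
  refine h1.trans ?_
  calc _ = ∑ k ∈ Finset.Ico j (n + 1), (if x ≤ (k : ℝ) then (n.choose k : ℝ) / 2 ^ n else 0) := by
        refine Finset.sum_congr rfl fun k hk => ?_
        rw [Finset.mem_Ico] at hk
        have : (j : ℝ) ≤ k := by exact_mod_cast hk.1
        rw [if_pos (hx.trans this)]
    _ ≤ _ := by
        refine Finset.sum_le_sum_of_subset_of_nonneg ?_ ?_
        · intro k hk
          simp only [Finset.mem_Ico, Finset.mem_range] at *
          exact hk.2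
        · intro k _ _
          split_ifs <;> positivity

lemma aux_small : ∀ n < 14, 0 < n → 2 ^ n ≤ 4 * ∑ k ∈ Finset.Ico
    (if n % 2 = 1 ∧ 9 ≤ n then n / 2 + 2 else n / 2 + 1) (n + 1), n.choose k := by
  decide +kernel

lemma aux_main (n : ℕ) (hn : 0 < n) (t : ℝ) (ht : 0 < t) (htn : t ^ 2 ≤ n / 32) :
    (1 : ℝ) / 4 ≤ ∑ k ∈ Finset.range (n + 1),
          if n / 2 + t ≤ (k : ℝ) then (n.choose k : ℝ) / 2 ^ n else 0 := by
  rcases lt_or_ge n 14 with h14 | h14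
  · refine aux_red n (if n % 2 = 1 ∧ 9 ≤ n then n / 2 + 2 else n / 2 + 1) _ ?_
      (by exact_mod_cast aux_small n h14 hn)
    clear hn
    have h1 : t ≤ 1 := by
      have : (n : ℝ) < 14 := by exact_mod_cast h14
      nlinarith
    have h2 : n < 9 → t ≤ 1 / 2 := by
      intro h
      have : (n : ℝ) ≤ 8 := by exact_mod_cast (by omega : n ≤ 8)
      nlinarith
    obtain ⟨m, hm | hm⟩ := Nat.even_or_odd' n
    · rw [if_neg (by omega), show n / 2 = m by omega]
      rw [hm]; push_cast; linarith
    · split_ifs with h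
      · rw [show n / 2 = m by omega, hm]; push_cast; linarith
      · have := h2 (by omega)
        rw [show n / 2 = m by omega, hm]; push_cast; linarith
  · have hnR : (14 : ℝ) ≤ n := by exact_mod_cast h14
    obtain ⟨j, hj⟩ : ∃ j, j = ⌈(n / 2 + t : ℝ)⌉₊ := ⟨_, rfl⟩
    have hj1 : (n / 2 + t : ℝ) ≤ j := hj ▸ Nat.le_ceil _
    have hj2 : (j : ℝ) < n / 2 + t + 1 := hj ▸ Nat.ceil_lt_add_one (by positivity)
    refine aux_red n j _ hj1 ?_
    have a : n < 2 * j := by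
      have : (n : ℝ) < 2 * j := by linarith
      exact_mod_cast this
    have b : j ≤ n := by
      have : t ≤ n / 2 := by nlinarith
      rw [hj]
      exact Nat.ceil_le.2 (by linarith)
    have hs := aux_sym n j a b
    have hm := aux_mid n
    have hs' : (2 : ℝ) ^ n ≤ 2 * ∑ k ∈ Finset.Ico j (n + 1), (n.choose k : ℝ)
      + ((2 * j - n - 1 : ℕ) : ℝ) * n.choose (n / 2) := by exact_mod_cast hs
    have hm' : (n.choose (n / 2) : ℝ) ^ 2 * (3 * n + 2) ≤ 2 * 4 ^ n := by exact_mod_cast hm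
    have hc : ((2 * j - n - 1 : ℕ) : ℝ) ≤ 2 * t + 1 := by
      rw [Nat.sub_sub, Nat.cast_sub (by omega)]
      push_cast; linarith
    set C : ℝ := ((n.choose (n / 2) : ℕ) : ℝ) with hC
    have hC0 : 0 ≤ C := by positivity
    have h4 : (4 : ℝ) ^ n = (2 ^ n) ^ 2 := by rw [← pow_mul, mul_comm, pow_mul]; norm_num
    have hq : (2 * t + 1) ^ 2 ≤ (3 * n + 2) / 8 := by
      nlinarith [sq_nonneg (2 * t - 1.32)]
    have hf : (2 * t + 1) * C ≤ 2 ^ n / 2 := by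
      refine abs_le_of_sq_le_sq' ?_ (by positivity) |>.2
      rw [mul_pow]
      have := mul_le_mul_of_nonneg_right hq (sq_nonneg C)
      rw [h4] at hm'
      nlinarith
    have := mul_le_mul_of_nonneg_right hc hC0
    linarith


open Finset

/-- **Anti-concentration core of the Bellman-backup lower bound.**  For `H ≥ 1`,
`ε ∈ (0,1)`, and a positive integer `n ≤ 4^H / (32 ε²)`, a Binomial(n, 1/2)
random variable `X` (the number of successes among `n` fair coin flips, so that
`P[X = k] = C(n,k) / 2ⁿ`) satisfies `P[X ≥ n (1/2 + ε/2^H)] ≥ 1/4`. -/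
theorem binomial_tail_anticoncentration
    (H : ℕ) (hH : 1 ≤ H) (ε : ℝ) (hε0 : 0 < ε) (hε1 : ε < 1)
    (n : ℕ) (hn : 0 < n) (hnle : (n : ℝ) ≤ 4 ^ H / (32 * ε ^ 2)) :
    (1 : ℝ) / 4
      ≤ ∑ k ∈ Finset.range (n + 1),
          if (n : ℝ) * (1 / 2 + ε / 2 ^ H) ≤ (k : ℝ)
          then (n.choose k : ℝ) / 2 ^ n else 0 := by
  have hnR : (0 : ℝ) < n := by exact_mod_cast hn
  have h := aux_main n hn (n * (ε / 2 ^ H)) (by positivity) (by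
    have h4 : (4 : ℝ) ^ H = (2 ^ H) ^ 2 := by rw [← pow_mul, mul_comm, pow_mul]; norm_num
    rw [h4, le_div_iff₀ (by positivity)] at hnle
    have h2 : (0 : ℝ) < (2 ^ H) ^ 2 := by positivity
    rw [mul_pow, div_pow, ← mul_div_assoc, div_le_iff₀ h2]
    nlinarith)
  have e : (n : ℝ) * (1 / 2 + ε / 2 ^ H) = n / 2 + n * (ε / 2 ^ H) := by ring
  rw [e]
  exact h
end

section
/- (Core equivalence in the NP-hardness reduction for OLIVE's optimization.) Let ψ be a 3-CNF formula over n Boolean variables given by m clauses, where clause j consists of three literals (var(j,k), pol(j,k)) for k ∈ {1,2,3}, with var(j,k) ∈ {1,…,n} a variable index and pol(j,k) ∈ {true,false} its polarity (true meaning the positive literal x_i, false meaning ¬x_i); an assignment y : {1,…,n} → {true,false} satisfies ψ iff for every clause j there is some k with y(var(j,k)) = pol(j,k). Then ψ is satisfiable if and only if there exists v : {1,…,n} × {true,false} → [0,1] such that (i) v(i,true) + v(i,false) = 1 for every i, and (ii) for every clause j there exists b : {1,2,3} → {true,false}, not identically false, such that for every k ∈ {1,2,3}, v( var(j,k), pol(j,k)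 if b(k) = true, and the negation of pol(j,k) if b(k) = false ) = 1. -/
/-- **Core equivalence in the NP-hardness reduction for OLIVE's optimization.**
A 3-CNF formula with `m` clauses over `n` variables, whose `j`-th clause
consists of the literals `(var j k, pol j k)` for `k ∈ {1,2,3}`, is satisfiable
if and only if there is an assignment `v` of values in `[0,1]` to the `2n`
literal states such that `v(i, true) + v(i, false) = 1` for every variable `i`,
and for every clause `j` there is a choice `b : Fin 3 → Bool`, not identically
`false`, with `v` equal to `1` on the literal selected by `b k` for every
`k` (the literal itself if `b k = true`, its negation if `b k = false`). -/
theorem olive_np_hardness_core_equivalence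
    (n m : ℕ) (var : Fin m → Fin 3 → Fin n) (pol : Fin m → Fin 3 → Bool) :
    (∃ y : Fin n → Bool, ∀ j : Fin m, ∃ k : Fin 3, y (var j k) = pol j k)
    ↔ ∃ v : Fin n → Bool → ℝ,
        (∀ (i : Fin n) (b : Bool), v i b ∈ Set.Icc (0 : ℝ) 1)
        ∧ (∀ i : Fin n, v i true + v i false = 1)
        ∧ ∀ j : Fin m, ∃ b : Fin 3 → Bool, (∃ k : Fin 3, b k = true)
            ∧ ∀ k : Fin 3,
                v (var j k) (if b k then pol j k else !(pol j k)) = 1 := by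
  classical
  constructor
  · rintro ⟨y, hy⟩
    refine ⟨fun i c => if y i = c then 1 else 0, ?_, ?_, ?_⟩
    · intro i c
      by_cases h : y i = c <;> simp [h]
    · intro i
      cases h : y i <;> simp [h]
    · intro j
      obtain ⟨k, hk⟩ := hy j
      refine ⟨fun k => decide (y (var j k) = pol j k), ⟨k, by simp [hk]⟩, ?_⟩
      intro k
      cases h : y (var j k) <;> cases h' : pol j k <;> simp [h, h']
  · rintro ⟨v, _, hsum, hc⟩
    refine ⟨fun i => decide (v i true = 1), fun j => ?_⟩
    obtain ⟨b, ⟨k, hk⟩, hb⟩ := hc j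
    refine ⟨k, ?_⟩
    have h1 := hb k
    have h2 := hsum (var j k)
    rw [hk] at h1
    cases h' : pol j k
    · simp only [h', if_true] at h1
      have h3 : v (var j k) true ≠ 1 := by
        intro h4
        linarith
      simp [h3]
    · simp only [h', if_true] at h1
      simp [h1]
end
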